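/- arXiv:1911.06920 — 3 statements merged into one kernel-verified Lean document; each statement's English description precedes it below -/
import Mathlib

section
/- (Almost-sure full convergence under bounded second moments.) Consider a TRish process for f with constant parameters γ_{1,k} = γ1 ≥ γ2 = γ_{2,k} > 0 and stepsizes α_k = a/(b + k) for some a, b > 0 such that α_k ≤ γ2/(4γ1²(L_g + M_H)) for all k. Suppose there exist M_g, M_H, M_{g,2} > 0 such that for all k, almost surely E[‖∇f(x_k) − g_k‖² | ℱ_k] ≤ M_g·α_k, ‖H_k‖ ≤ M_H, and E[‖g_k‖² | ℱ_k] ≤ M_{g,2}. Then lim_{k→∞} ‖∇f(x_k)‖ = 0 almost surely. -/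
/-!
The proof combines a one-step decrease with a deterministic argument along each sample path.

Comparing the model value of `s` with that of the gradient step `t = γ2 α` and applying Young's
inequality to `⟪∇f(x) - g, s⟫` gives, almost surely (`one_step`),
`f(x + s) ≤ f(x) - (γ2 / 2) α ‖g‖² + (γ1² / γ2) α ‖∇f(x) - g‖²`.
The integral of the last term is `O(α²)`, which is summable. Telescoping and the lower bound on `f`
then show that both `∑ α ‖g‖²` and `∑ α ‖∇f(x) - g‖²` have finite expectation, so both are finite
almost surely, and hence so is `∑ α ‖∇f(x)‖²`.

On such a path, `‖s‖ ≤ γ1 α ‖g‖` and the Lipschitz bound on `∇f` make the increments of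
`‖∇f(x)‖²` at most a constant times `α (‖g‖² + ‖∇f(x)‖²)`, hence summable. So `‖∇f(x)‖²` converges,
and its limit must vanish because `∑ α` diverges (`tendsto_zero_of_summable`).
-/

open MeasureTheory RealInnerProductSpace Filter

noncomputable section

/-- A step `s` achieves Cauchy decrease for `(g, H, Δ)`. -/
def CauchyDecrease {n : ℕ} (g : EuclideanSpace ℝ (Fin n))
    (H : EuclideanSpace ℝ (Fin n) →L[ℝ] EuclideanSpace ℝ (Fin n))
    (Δ : ℝ) (s : EuclideanSpace ℝ (Fin n)) : Prop :=
  ‖s‖ ≤ Δ ∧ ∀ t : ℝ, 0 ≤ t → t * ‖g‖ ≤ Δ →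
    ⟪g, s⟫ + (1/2) * ⟪s, H s⟫ ≤ -(t * ‖g‖^2) + (1/2) * t^2 * ⟪g, H g⟫

/-- The TRish trust-region radius `Δ(α, γ1, γ2, g)`. -/
def radius {n : ℕ} (α γ1 γ2 : ℝ) (g : EuclideanSpace ℝ (Fin n)) : ℝ :=
  if ‖g‖ < 1/γ1 then γ1 * α * ‖g‖
  else if ‖g‖ ≤ 1/γ2 then α
  else γ2 * α * ‖g‖

/-- The first-order Taylor estimate for `f`, with constant `L` in place of `L / 2`. -/
lemma descent_estimate {n : ℕ} {f : EuclideanSpace ℝ (Fin n) → ℝ} {L : ℝ} (hL : 0 < L)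
    (hf : ContDiff ℝ 2 f)
    (hlip : ∀ y z, ‖gradient f y - gradient f z‖ ≤ L * ‖y - z‖)
    (y s : EuclideanSpace ℝ (Fin n)) :
    f (y + s) ≤ f y + ⟪gradient f y, s⟫ + L * ‖s‖ ^ 2 := by
  have hd : Differentiable ℝ f := hf.differentiable (by norm_num)
  have key := (convex_segment y (y + s)).norm_image_sub_le_of_norm_hasFDerivWithin_le'
    (f := f) (f' := fun z => InnerProductSpace.toDual ℝ _ (gradient f z))
    (φ := InnerProductSpace.toDual ℝ _ (gradient f y)) (C := L * ‖s‖)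
    (fun z _ => ((hd z).hasGradientAt.hasFDerivAt).hasFDerivWithinAt)
    (fun z hz => by
      rw [← map_sub, LinearIsometryEquiv.norm_map]
      refine (hlip z y).trans (mul_le_mul_of_nonneg_left ?_ hL.le)
      have := norm_sub_le_of_mem_segment hz
      simpa using this)
    (left_mem_segment ℝ _ _) (right_mem_segment ℝ _ _)
  simp only [add_sub_cancel_left, InnerProductSpace.toDual_apply_apply] at key
  have := (abs_le.1 (Real.norm_eq_abs _ ▸ key)).2
  nlinarith

lemma radius_le {n : ℕ} {α γ1 γ2 : ℝ} (hα : 0 < α) (h2 : 0 < γ2) (h12 : γ2 ≤ γ1)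
    (g : EuclideanSpace ℝ (Fin n)) : radius α γ1 γ2 g ≤ γ1 * α * ‖g‖ := by
  have h1 : 0 < γ1 := h2.trans_le h12
  unfold radius
  split_ifs with h h'
  · exact le_rfl
  · rw [not_lt, div_le_iff₀ h1] at h
    nlinarith
  · gcongr

lemma le_radius {n : ℕ} {α γ1 γ2 : ℝ} (hα : 0 < α) (h2 : 0 < γ2) (h12 : γ2 ≤ γ1)
    (g : EuclideanSpace ℝ (Fin n)) : γ2 * α * ‖g‖ ≤ radius α γ1 γ2 g := by
  unfold radius
  split_ifs with h h'
  · gcongr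
  · rw [le_div_iff₀ h2] at h'
    nlinarith
  · exact le_rfl

/-- One step decreases `f` by a multiple of `α ‖g‖²`, up to `α` times the squared gradient
error: the cross term `⟪∇f - g, s⟫` is split by Young's inequality, and the stepsize bound makes
the curvature terms at most `γ2 α ‖g‖² / 4`. -/
lemma one_step {n : ℕ} {f : EuclideanSpace ℝ (Fin n) → ℝ} {L M α γ1 γ2 : ℝ} (hL : 0 < L)
    (hM : 0 < M) (hf : ContDiff ℝ 2 f)
    (hlip : ∀ y z, ‖gradient f y - gradient f z‖ ≤ L * ‖y - z‖)
    (hα : 0 < α) (h2 : 0 < γ2) (h12 : γ2 ≤ γ1) (hub : α ≤ γ2 / (4 * γ1 ^ 2 * (L + M)))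
    (y g s : EuclideanSpace ℝ (Fin n))
    (H : EuclideanSpace ℝ (Fin n) →L[ℝ] EuclideanSpace ℝ (Fin n)) (hH : ‖H‖ ≤ M)
    (hc : CauchyDecrease g H (radius α γ1 γ2 g) s) :
    f (y + s) ≤ f y - γ2 / 2 * (α * ‖g‖ ^ 2)
      + γ1 ^ 2 / γ2 * (α * ‖gradient f y - g‖ ^ 2) := by
  have h1 : 0 < γ1 := h2.trans_le h12
  have hs : ‖s‖ ≤ γ1 * α * ‖g‖ := hc.1.trans (radius_le hα h2 h12 g)
  have hdec := hc.2 (γ2 * α) (by positivity) (le_radius hα h2 h12 g)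
  have hq : ∀ v : EuclideanSpace ℝ (Fin n), |⟪v, H v⟫| ≤ M * ‖v‖ ^ 2 := fun v => by
    have e1 := abs_real_inner_le_norm v (H v)
    have e2 : ‖H v‖ ≤ M * ‖v‖ := H.le_of_opNorm_le hH v
    nlinarith [norm_nonneg v]
  have hqs := (abs_le.1 (hq s)).1
  have hqg := (abs_le.1 (hq g)).2
  have hdes := descent_estimate hL hf hlip y s
  set e := gradient f y - g with he
  have hin : ⟪gradient f y, s⟫ = ⟪g, s⟫ + ⟪e, s⟫ := by
    rw [he, inner_sub_left]; ring
  have hcs : ⟪e, s⟫ ≤ ‖e‖ * (γ1 * α * ‖g‖) :=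
    (real_inner_le_norm e s).trans (by gcongr)
  have hs2 : ‖s‖ ^ 2 ≤ (γ1 * α * ‖g‖) ^ 2 := by gcongr
  have hub' : γ1 ^ 2 * α * (L + M) ≤ γ2 / 4 := by
    rw [le_div_iff₀ (by positivity)] at hub
    nlinarith
  have hyoung : ‖e‖ * (γ1 * α * ‖g‖) ≤ γ2 / 4 * (α * ‖g‖ ^ 2) + γ1 ^ 2 / γ2 * (α * ‖e‖ ^ 2) := by
    have : γ2 / 4 * (α * ‖g‖ ^ 2) + γ1 ^ 2 / γ2 * (α * ‖e‖ ^ 2) - ‖e‖ * (γ1 * α * ‖g‖)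
        = α / γ2 * (γ2 / 2 * ‖g‖ - γ1 * ‖e‖) ^ 2 := by field_simp; ring
    have h0 : 0 ≤ α / γ2 * (γ2 / 2 * ‖g‖ - γ1 * ‖e‖) ^ 2 := by positivity
    linarith
  have hg2 : (γ2 * α) ^ 2 * ⟪g, H g⟫ ≤ (γ1 * α) ^ 2 * (M * ‖g‖ ^ 2) := by
    calc _ ≤ (γ2 * α) ^ 2 * (M * ‖g‖ ^ 2) := by gcongr
      _ ≤ _ := by gcongr
  have hs3 : (L + M / 2) * ‖s‖ ^ 2 ≤ (L + M / 2) * (γ1 * α * ‖g‖) ^ 2 := by gcongr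
  have hfin : (γ1 ^ 2 * α * (L + M)) * (α * ‖g‖ ^ 2) ≤ γ2 / 4 * (α * ‖g‖ ^ 2) := by gcongr
  nlinarith

/-- If `d` moves by at most a multiple of `α u` and `∑ α (u² + d²) < ∞`, then `d²` has summable
increments and converges; as `∑ α = ∞`, the limit is zero. -/
lemma tendsto_zero_of_summable {α d u : ℕ → ℝ} {A C : ℝ} (hα : ∀ i, 0 < α i) (hA : ∀ i, α i ≤ A)
    (hC : 0 < C) (hd : ∀ i, 0 ≤ d i) (hu : ∀ i, 0 ≤ u i) (hns : ¬ Summable α)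
    (hsu : Summable fun i => α i * u i ^ 2) (hsd : Summable fun i => α i * d i ^ 2)
    (hstep : ∀ i, |d (i + 1) - d i| ≤ C * α i * u i) :
    Tendsto d atTop (nhds 0) := by
  have hsum : Summable fun i => dist (d i ^ 2) (d (i + 1) ^ 2) := by
    refine Summable.of_nonneg_of_le (fun _ => dist_nonneg) (fun i => ?_)
      ((hsu.mul_left (C + C ^ 2 * A)).add (hsd.mul_left C))
    have hw : 0 ≤ C * α i * u i := mul_nonneg (mul_nonneg hC.le (hα i).le) (hu i)
    have hst := hstep i
    have hup := (abs_le.1 hst).2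
    have e1 : dist (d i ^ 2) (d (i + 1) ^ 2) = |d (i + 1) - d i| * (d (i + 1) + d i) := by
      rw [dist_comm, Real.dist_eq, sq_sub_sq, abs_mul,
        abs_of_nonneg (add_nonneg (hd (i + 1)) (hd i)), mul_comm]
    have e2 : |d (i + 1) - d i| * (d (i + 1) + d i)
        ≤ (C * α i * u i) * (2 * d i + C * α i * u i) :=
      mul_le_mul hst (by linarith) (add_nonneg (hd _) (hd _)) hw
    have e3 : (C * α i) * (2 * (u i * d i)) ≤ (C * α i) * (u i ^ 2 + d i ^ 2) :=
      mul_le_mul_of_nonneg_left (by nlinarith [sq_nonneg (u i - d i)])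
        (mul_nonneg hC.le (hα i).le)
    have e4 : (C ^ 2 * (α i * u i ^ 2)) * α i ≤ (C ^ 2 * (α i * u i ^ 2)) * A :=
      mul_le_mul_of_nonneg_left (hA i)
        (mul_nonneg (sq_nonneg _) (mul_nonneg (hα i).le (sq_nonneg _)))
    rw [e1]
    nlinarith
  obtain ⟨l, hl⟩ := cauchySeq_tendsto_of_complete (cauchySeq_of_summable_dist hsum)
  have hl0 : 0 ≤ l := ge_of_tendsto' hl fun i => sq_nonneg _
  obtain rfl : l = 0 := by
    by_contra hne
    have hlp : 0 < l := lt_of_le_of_ne hl0 (Ne.symm hne)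
    refine hns (Summable.of_norm_bounded_eventually_nat (hsd.mul_left (2 / l)) ?_)
    filter_upwards [hl.eventually (lt_mem_nhds (half_lt_self hlp))] with i hi
    rw [Real.norm_of_nonneg (hα i).le]
    have : α i * (l / 2) ≤ α i * d i ^ 2 := mul_le_mul_of_nonneg_left hi.le (hα i).le
    have h2 : 2 / l * (α i * (l / 2)) ≤ 2 / l * (α i * d i ^ 2) := by gcongr
    have h3 : 2 / l * (α i * (l / 2)) = α i := by field_simp
    linarith
  have := hl.sqrt
  simpa [Real.sqrt_sq, hd] using this

lemma ae_summable_of_integral_le {Ω : Type*} {m0 : MeasurableSpace Ω} {P : Measure Ω}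
    {Y : ℕ → Ω → ℝ} (hY : ∀ i ω, 0 ≤ Y i ω) (hint : ∀ i, Integrable (Y i) P)
    {C : ℝ} (hC : ∀ N, ∑ i ∈ Finset.range N, ∫ ω, Y i ω ∂P ≤ C) :
    ∀ᵐ ω ∂P, Summable fun i => Y i ω := by
  have hs : Summable fun i => ∫ ω, Y i ω ∂P :=
    summable_of_sum_range_le (fun i => integral_nonneg (hY i)) hC
  have hfin : ∫⁻ ω, ∑' i, ENNReal.ofReal (Y i ω) ∂P ≠ ⊤ := by
    rw [lintegral_tsum fun i => (hint i).aestronglyMeasurable.aemeasurable.ennreal_ofReal]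
    simp_rw [← ofReal_integral_eq_lintegral_ofReal (hint _) (ae_of_all _ (hY _))]
    exact hs.tsum_ofReal_ne_top
  have hm : AEMeasurable (fun ω => ∑' i, ENNReal.ofReal (Y i ω)) P :=
    AEMeasurable.tsum fun i => (hint i).aestronglyMeasurable.aemeasurable.ennreal_ofReal
  filter_upwards [ae_lt_top' hm hfin] with ω hω
  have := ENNReal.summable_toReal hω.ne
  simpa [ENNReal.toReal_ofReal, hY] using this

/-- Almost-sure full convergence under bounded second moments. -/
theorem trish_as_full_convergence
    {n : ℕ} (hn : 1 ≤ n)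
    (f : EuclideanSpace ℝ (Fin n) → ℝ)
    (L_g : ℝ) (hLg : 0 < L_g)
    (hf : ContDiff ℝ 2 f)
    (hlip : ∀ y z, ‖gradient f y - gradient f z‖ ≤ L_g * ‖y - z‖)
    (f_inf : ℝ) (hbdd : ∀ y, f_inf ≤ f y) (hfinf : f_inf = ⨅ y, f y)
    {Ω : Type*} {m0 : MeasurableSpace Ω} (P : Measure Ω) [IsProbabilityMeasure P]
    (ℱ : Filtration ℕ m0)
    (x g s : ℕ → Ω → EuclideanSpace ℝ (Fin n))
    (H : ℕ → Ω → (EuclideanSpace ℝ (Fin n) →L[ℝ] EuclideanSpace ℝ (Fin n)))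
    (γ1 γ2 : ℝ) (hγ2 : 0 < γ2) (hγ12 : γ2 ≤ γ1)
    (a b : ℝ) (ha : 0 < a) (hb : 0 < b)
    (α : ℕ → ℝ) (hαdef : ∀ k : ℕ, α k = a / (b + k))
    (x1 : EuclideanSpace ℝ (Fin n)) (hx1 : ∀ ω, x 1 ω = x1)
    (hx_meas : ∀ k, 1 ≤ k → StronglyMeasurable[ℱ k] (x k))
    (hg_meas : ∀ k, 1 ≤ k → StronglyMeasurable[ℱ (k+1)] (g k))
    (hs_meas : ∀ k, 1 ≤ k → StronglyMeasurable[ℱ (k+1)] (s k))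
    (hH_meas : ∀ k, 1 ≤ k → StronglyMeasurable[ℱ (k+1)] (H k))
    (hHsymm : ∀ k ω u v, ⟪H k ω u, v⟫ = ⟪u, H k ω v⟫)
    (hstep : ∀ k, 1 ≤ k → ∀ ω, x (k+1) ω = x k ω + s k ω)
    (hunbiased : ∀ k, 1 ≤ k → P[g k|ℱ k] =ᵐ[P] fun ω => gradient f (x k ω))
    (hcauchy : ∀ k, 1 ≤ k → ∀ᵐ ω ∂P,
      CauchyDecrease (g k ω) (H k ω) (radius (α k) γ1 γ2 (g k ω)) (s k ω))
    (hint_f : ∀ k, Integrable (fun ω => f (x k ω)) P)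
    (hint_grad : ∀ k, Integrable (fun ω => ‖gradient f (x k ω)‖^2) P)
    (hint_g : ∀ k, Integrable (g k) P)
    (hint_g2 : ∀ k, Integrable (fun ω => ‖g k ω‖^2) P)
    (M_g M_H M_g2 : ℝ) (hMg : 0 < M_g) (hMH : 0 < M_H) (hMg2 : 0 < M_g2)
    (hvar : ∀ k, 1 ≤ k → ∀ᵐ ω ∂P,
      (P[(fun ω' => ‖gradient f (x k ω') - g k ω'‖^2)|ℱ k]) ω ≤ M_g * α k)
    (hHbd : ∀ k, 1 ≤ k → ∀ᵐ ω ∂P, ‖H k ω‖ ≤ M_H)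
    (hmom : ∀ k, 1 ≤ k → ∀ᵐ ω ∂P, (P[(fun ω' => ‖g k ω'‖^2)|ℱ k]) ω ≤ M_g2)
    (hαub : ∀ k, 1 ≤ k → α k ≤ γ2 / (4 * γ1^2 * (L_g + M_H))) :
    ∀ᵐ ω ∂P, Tendsto (fun k : ℕ => ‖gradient f (x k ω)‖) atTop (nhds 0) := by
  have h1 : 0 < γ1 := hγ2.trans_le hγ12
  have hαpos : ∀ k, 0 < α k := fun k => by rw [hαdef]; positivity
  have hgc : Continuous (gradient f) :=
    (LipschitzWith.of_dist_le_mul (K := ⟨L_g, hLg.le⟩)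
      (fun y z => by rw [dist_eq_norm, dist_eq_norm]; exact hlip y z)).continuous
  have hsq : Summable fun i : ℕ => α (i + 1) ^ 2 := by
    have h0 : Summable fun i : ℕ => a ^ 2 * (1 / ((i + 1 : ℕ) : ℝ) ^ 2) :=
      ((summable_nat_add_iff 1).2 (Real.summable_one_div_nat_pow.2 one_lt_two)).mul_left _
    refine Summable.of_nonneg_of_le (fun _ => sq_nonneg _) (fun i => ?_) h0
    rw [hαdef, div_pow, div_eq_mul_one_div]
    gcongr
    linarith
  have hns : ¬ Summable fun i : ℕ => α (i + 1) := by
    intro hs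
    refine Real.not_summable_one_div_natCast ((summable_nat_add_iff 1).1 ?_)
    refine Summable.of_nonneg_of_le (fun _ => by positivity) (fun i => ?_)
      (hs.mul_left ((b + 1) / a))
    rw [hαdef, div_mul_div_comm, div_le_div_iff₀ (by positivity) (by positivity)]
    push_cast
    have : 0 ≤ a * b * (i : ℝ) := by positivity
    nlinarith
  have hA : ∀ i : ℕ, α (i + 1) ≤ a / b := fun i => by
    rw [hαdef]; gcongr; linarith [Nat.cast_nonneg (α := ℝ) (i + 1)]
  -- The squared gradient error is integrable, with integral at most `M_g * α k`.
  have hmeas : ∀ k, 1 ≤ k → AEStronglyMeasurable (fun ω => gradient f (x k ω) - g k ω) P :=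
    fun k hk => (hgc.comp_aestronglyMeasurable
      ((hx_meas k hk).mono (ℱ.le k)).aestronglyMeasurable).sub (hint_g k).aestronglyMeasurable
  have hint_e : ∀ k, 1 ≤ k → Integrable (fun ω => ‖gradient f (x k ω) - g k ω‖ ^ 2) P := by
    intro k hk
    refine (((hint_grad k).const_mul 2).add ((hint_g2 k).const_mul 2)).mono'
      ((hmeas k hk).norm.pow 2) (ae_of_all _ fun ω => ?_)
    rw [Real.norm_of_nonneg (sq_nonneg _)]
    have := norm_sub_le (gradient f (x k ω)) (g k ω)
    have h0 := norm_nonneg (gradient f (x k ω) - g k ω)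
    simp only [Pi.add_apply]
    nlinarith [sq_nonneg (‖gradient f (x k ω)‖ - ‖g k ω‖)]
  have herr : ∀ k, 1 ≤ k → ∫ ω, ‖gradient f (x k ω) - g k ω‖ ^ 2 ∂P ≤ M_g * α k := by
    intro k hk
    rw [← integral_condExp (ℱ.le k)]
    have := integral_mono_ae (integrable_condExp (μ := P) (m := ℱ k)
      (f := fun ω' => ‖gradient f (x k ω') - g k ω'‖ ^ 2)) (integrable_const (M_g * α k))
      (hvar k hk)
    simpa using this
  have hdec : ∀ k, 1 ≤ k → γ2 / 2 * ∫ ω, α k * ‖g k ω‖ ^ 2 ∂P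
      ≤ ∫ ω, f (x k ω) ∂P - ∫ ω, f (x (k + 1) ω) ∂P
        + γ1 ^ 2 / γ2 * ∫ ω, α k * ‖gradient f (x k ω) - g k ω‖ ^ 2 ∂P := by
    intro k hk
    have i1 := ((hint_g2 k).const_mul (α k)).const_mul (γ2 / 2)
    have i2 := ((hint_e k hk).const_mul (α k)).const_mul (γ1 ^ 2 / γ2)
    have i3 := (hint_f k).sub (hint_f (k + 1))
    have := integral_mono_ae i1 (i3.add i2) (by
      filter_upwards [hcauchy k hk, hHbd k hk] with ω hc hH
      have := one_step hLg hMH hf hlip (hαpos k) hγ2 hγ12 (hαub k hk) (x k ω) (g k ω) (s k ω)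
        (H k ω) hH hc
      rw [← hstep k hk ω] at this
      simp only [Pi.add_apply, Pi.sub_apply]
      linarith)
    rw [integral_add' i3 i2, integral_sub' (hint_f k) (hint_f (k + 1))] at this
    rwa [integral_const_mul (γ2 / 2), integral_const_mul (γ1 ^ 2 / γ2)] at this
  have hE : ∀ i : ℕ, ∫ ω, α (i + 1) * ‖gradient f (x (i + 1) ω) - g (i + 1) ω‖ ^ 2 ∂P
      ≤ M_g * α (i + 1) ^ 2 := fun i => by
    rw [integral_const_mul]
    nlinarith [mul_le_mul_of_nonneg_left (herr (i + 1) (by omega)) (hαpos (i + 1)).le]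
  have hEsum : ∀ N, ∑ i ∈ Finset.range N,
      ∫ ω, α (i + 1) * ‖gradient f (x (i + 1) ω) - g (i + 1) ω‖ ^ 2 ∂P
      ≤ M_g * ∑' i : ℕ, α (i + 1) ^ 2 := fun N => by
    refine (Finset.sum_le_sum fun i _ => hE i).trans ?_
    rw [← Finset.mul_sum]
    exact mul_le_mul_of_nonneg_left (hsq.sum_le_tsum _ fun _ _ => sq_nonneg _) hMg.le
  have hGsum : ∀ N, ∑ i ∈ Finset.range N, ∫ ω, α (i + 1) * ‖g (i + 1) ω‖ ^ 2 ∂P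
      ≤ 2 / γ2 * (∫ ω, f (x 1 ω) ∂P - f_inf
        + γ1 ^ 2 / γ2 * (M_g * ∑' i : ℕ, α (i + 1) ^ 2)) := fun N => by
    have t1 := Finset.sum_le_sum fun i (_ : i ∈ Finset.range N) => hdec (i + 1) (by omega)
    rw [Finset.sum_add_distrib, ← Finset.mul_sum, ← Finset.mul_sum,
      Finset.sum_range_sub' (fun i => ∫ ω, f (x (i + 1) ω) ∂P)] at t1
    have t2 : f_inf ≤ ∫ ω, f (x (N + 1) ω) ∂P := by
      simpa using integral_mono (integrable_const f_inf) (hint_f (N + 1)) fun ω => hbdd _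
    have t3 := mul_le_mul_of_nonneg_left (hEsum N) (by positivity : 0 ≤ γ1 ^ 2 / γ2)
    simp only [zero_add] at t1
    rw [div_mul_eq_mul_div, le_div_iff₀ hγ2]
    linarith
  have hasG := ae_summable_of_integral_le
    (fun i ω => mul_nonneg (hαpos (i + 1)).le (sq_nonneg ‖g (i + 1) ω‖))
    (fun i => (hint_g2 (i + 1)).const_mul _) hGsum
  have hasE := ae_summable_of_integral_le
    (fun i ω => mul_nonneg (hαpos (i + 1)).le
      (sq_nonneg ‖gradient f (x (i + 1) ω) - g (i + 1) ω‖))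
    (fun i => (hint_e (i + 1) (by omega)).const_mul _) hEsum
  have hca : ∀ᵐ ω ∂P, ∀ i : ℕ, CauchyDecrease (g (i + 1) ω) (H (i + 1) ω)
      (radius (α (i + 1)) γ1 γ2 (g (i + 1) ω)) (s (i + 1) ω) :=
    ae_all_iff.2 fun i => hcauchy (i + 1) (by omega)
  filter_upwards [hasG, hasE, hca] with ω hG hEω hc
  refine (tendsto_add_atTop_iff_nat 1).1 ?_
  refine tendsto_zero_of_summable (α := fun i => α (i + 1)) (u := fun i => ‖g (i + 1) ω‖)
    (C := L_g * γ1) (fun i => hαpos _) hA (by positivity) (fun _ => norm_nonneg _)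
    (fun _ => norm_nonneg _) hns hG ?_ fun i => ?_
  · refine Summable.of_nonneg_of_le
      (fun i => mul_nonneg (hαpos (i + 1)).le (sq_nonneg _)) (fun i => ?_)
      ((hG.mul_left 2).add (hEω.mul_left 2))
    have hα0 := (hαpos (i + 1)).le
    have t := norm_add_le (gradient f (x (i + 1) ω) - g (i + 1) ω) (g (i + 1) ω)
    rw [sub_add_cancel] at t
    have t2 : ‖gradient f (x (i + 1) ω)‖ ^ 2
        ≤ 2 * ‖g (i + 1) ω‖ ^ 2 + 2 * ‖gradient f (x (i + 1) ω) - g (i + 1) ω‖ ^ 2 := by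
      nlinarith [norm_nonneg (gradient f (x (i + 1) ω)),
        sq_nonneg (‖gradient f (x (i + 1) ω) - g (i + 1) ω‖ - ‖g (i + 1) ω‖)]
    nlinarith [mul_le_mul_of_nonneg_left t2 hα0]
  · have hs := (hc i).1.trans (radius_le (hαpos (i + 1)) hγ2 hγ12 _)
    have t := hlip (x (i + 1 + 1) ω) (x (i + 1) ω)
    rw [hstep (i + 1) (by omega) ω, add_sub_cancel_left] at t
    rw [hstep (i + 1) (by omega) ω]
    calc _ ≤ _ := abs_norm_sub_norm_le _ _
      _ ≤ _ := t
      _ ≤ L_g * (γ1 * α (i + 1) * ‖g (i + 1) ω‖) := by gcongr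
      _ = _ := by ring
end
end

section
/- (PL case, fixed stepsize: linear convergence to a neighborhood.) Consider a TRish process for f with constant parameters (α_k, γ_{1,k}, γ_{2,k}) = (α, γ1, γ2) for all k, where γ1 ≥ γ2 > 0. Suppose f satisfies the Polyak–Łojasiewicz condition with constant c > 0, that there exist M_g, M_H > 0 with E[‖∇f(x_k) − g_k‖² | ℱ_k] ≤ M_g and ‖H_k‖ ≤ M_H almost surely for all k, and that 0 < α ≤ min{γ2/(4γ1²(L_g + M_H)), 4/(γ2·c)}. Then, with θ := 4(γ1²/γ2² − 1/8)·M_g/c, for every K ≥ 1: E[f(x_{K+1})] − f_inf ≤ θ + (1 − (1/4)γ2·c·α)^K · (f(x_1) − f_inf − θ). -/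
/-!
One TRish step satisfies, almost surely and with `e = ∇f(x) - g` the gradient error,
`f(x + s) ≤ f(x) - (γ2 α / 2) ‖g‖² + (α γ1² / γ2) ‖e‖²`.
The descent inequality for a gradient that is `L_g`-Lipschitz (`descent_inequality`) splits the
change of `f` into the quadratic model, the cross term `⟪e, s⟫` and curvature terms. The radius lies
between `γ2 α ‖g‖` and `γ1 α ‖g‖` (`radius_bounds`), so `t = γ2 α` is admissible in the Cauchy
decrease condition and `‖s‖ ≤ γ1 α ‖g‖`; the stepsize bound absorbs all curvature terms and
Young's inequality handles the cross term (`step_decrease`).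

Only a quarter of the decrease `(γ2 α / 2) ‖g‖²` is kept. Since
`‖g‖² = ‖∇f(x)‖² + ‖e‖² - 2 ⟪∇f(x), e⟫`, the Polyak–Łojasiewicz inequality turns the step inequality
into a contraction of `f - f_inf` by `1 - γ2 c α / 4`, up to a multiple of `‖e‖²` and a multiple of
`⟪∇f(x), e⟫`. In expectation the last term vanishes, because `∇f(x_k)` is `ℱ k`-measurable and `g_k`
is unbiased (`integral_inner_error_eq_zero`), and `E‖e‖² ≤ M_g`. The resulting affine recursion has
fixed point `θ` and is iterated in `affine_recursion_bound`.
-/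

open MeasureTheory RealInnerProductSpace Filter

noncomputable section

/-- The descent inequality for a function whose gradient is `L`-Lipschitz. -/
lemma descent_inequality {n : ℕ} {f : EuclideanSpace ℝ (Fin n) → ℝ} {L : ℝ}
    (hf : Differentiable ℝ f)
    (hlip : ∀ y z, ‖gradient f y - gradient f z‖ ≤ L * ‖y - z‖)
    (x s : EuclideanSpace ℝ (Fin n)) :
    f (x + s) ≤ f x + ⟪gradient f x, s⟫ + L / 2 * ‖s‖ ^ 2 := by
  -- `φ t = f (x + t s) - t ⟪∇f x, s⟫ - (L / 2) t² ‖s‖²` is antitone on `[0, 1]`.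
  have hline : ∀ t : ℝ, HasDerivAt (fun t : ℝ => f (x + t • s))
      ⟪gradient f (x + t • s), s⟫ t := by
    intro t
    have h1 : HasDerivAt (fun t : ℝ => x + t • s) s t := by
      simpa using ((hasDerivAt_id t).smul_const s).const_add x
    have h2 := (hf (x + t • s)).hasGradientAt.hasFDerivAt.comp_hasDerivAt t h1
    simpa [Function.comp_def] using h2
  have hφ : ∀ t : ℝ, HasDerivAt
      (fun t : ℝ => f (x + t • s) - t * ⟪gradient f x, s⟫ - L / 2 * ‖s‖ ^ 2 * t ^ 2)
      (⟪gradient f (x + t • s), s⟫ - ⟪gradient f x, s⟫ - L * ‖s‖ ^ 2 * t) t := by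
    intro t
    have h := ((hline t).sub ((hasDerivAt_id t).mul_const ⟪gradient f x, s⟫)).sub
      ((hasDerivAt_pow 2 t).const_mul (L / 2 * ‖s‖ ^ 2))
    refine h.congr_deriv ?_
    push_cast
    ring
  have hanti : AntitoneOn
      (fun t : ℝ => f (x + t • s) - t * ⟪gradient f x, s⟫ - L / 2 * ‖s‖ ^ 2 * t ^ 2)
      (Set.Icc 0 1) := by
    refine antitoneOn_of_deriv_nonpos (convex_Icc 0 1)
      (fun t _ => (hφ t).continuousAt.continuousWithinAt)
      (fun t _ => (hφ t).differentiableAt.differentiableWithinAt) ?_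
    intro t ht
    rw [interior_Icc] at ht
    rw [(hφ t).deriv]
    have h1 := real_inner_le_norm (gradient f (x + t • s) - gradient f x) s
    have h2 := hlip (x + t • s) x
    rw [add_sub_cancel_left, norm_smul, Real.norm_of_nonneg ht.1.le] at h2
    have h3 := mul_le_mul_of_nonneg_right h2 (norm_nonneg s)
    rw [inner_sub_left] at h1
    nlinarith
  have h := hanti (Set.left_mem_Icc.2 zero_le_one) (Set.right_mem_Icc.2 zero_le_one) zero_le_one
  simp only [one_smul, zero_smul, add_zero] at h
  linarith

lemma radius_bounds {n : ℕ} {α γ1 γ2 : ℝ} (hγ2 : 0 < γ2) (hγ12 : γ2 ≤ γ1) (hα : 0 < α)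
    (g : EuclideanSpace ℝ (Fin n)) :
    γ2 * α * ‖g‖ ≤ radius α γ1 γ2 g ∧ radius α γ1 γ2 g ≤ γ1 * α * ‖g‖ := by
  have hγ1 : 0 < γ1 := hγ2.trans_le hγ12
  have hmono : γ2 * α * ‖g‖ ≤ γ1 * α * ‖g‖ := by gcongr
  unfold radius
  split_ifs with h1 h2
  · exact ⟨hmono, le_rfl⟩
  · rw [not_lt, div_le_iff₀ hγ1] at h1
    rw [le_div_iff₀ hγ2] at h2
    constructor <;> nlinarith
  · exact ⟨le_rfl, hmono⟩

/-- Deterministic decrease over one step, with error governed by `‖∇f(x) - g‖²`. -/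
lemma step_decrease {n : ℕ} {f : EuclideanSpace ℝ (Fin n) → ℝ} {L : ℝ} (hL : 0 < L)
    (hf : Differentiable ℝ f)
    (hlip : ∀ y z, ‖gradient f y - gradient f z‖ ≤ L * ‖y - z‖)
    {α γ1 γ2 M : ℝ} (hγ2 : 0 < γ2) (hγ12 : γ2 ≤ γ1) (hα : 0 < α) (hM : 0 < M)
    (hα1 : α ≤ γ2 / (4 * γ1 ^ 2 * (L + M)))
    {x g s : EuclideanSpace ℝ (Fin n)}
    {H : EuclideanSpace ℝ (Fin n) →L[ℝ] EuclideanSpace ℝ (Fin n)} (hH : ‖H‖ ≤ M)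
    (hs : CauchyDecrease g H (radius α γ1 γ2 g) s) :
    f (x + s) ≤ f x - γ2 * α / 2 * ‖g‖ ^ 2 + α * γ1 ^ 2 / γ2 * ‖gradient f x - g‖ ^ 2 := by
  have hγ1 : 0 < γ1 := hγ2.trans_le hγ12
  obtain ⟨hr1, hr2⟩ := radius_bounds hγ2 hγ12 hα g
  obtain ⟨hsn, hcd⟩ := hs
  have hsn' : ‖s‖ ≤ γ1 * α * ‖g‖ := hsn.trans hr2
  have hquad : ∀ v : EuclideanSpace ℝ (Fin n), |⟪v, H v⟫| ≤ M * ‖v‖ ^ 2 := by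
    intro v
    calc |⟪v, H v⟫| ≤ ‖v‖ * ‖H v‖ := abs_real_inner_le_norm _ _
      _ ≤ ‖v‖ * (M * ‖v‖) := by gcongr; exact H.le_of_opNorm_le hH v
      _ = M * ‖v‖ ^ 2 := by ring
  have hC := hcd (γ2 * α) (by positivity) hr1
  have hd := descent_inequality hf hlip x s
  have hsq : ‖s‖ ^ 2 ≤ γ1 ^ 2 * α ^ 2 * ‖g‖ ^ 2 := by
    calc ‖s‖ ^ 2 ≤ (γ1 * α * ‖g‖) ^ 2 := by gcongr
      _ = _ := by ring
  -- The stepsize bound, in the two forms in which it absorbs curvature.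
  have hα' : γ1 ^ 2 * α * (L + M) ≤ γ2 / 4 := by
    rw [le_div_iff₀ (by positivity)] at hα1
    linarith
  have hcurv1 : (L + M) / 2 * ‖s‖ ^ 2 ≤ γ2 * α / 8 * ‖g‖ ^ 2 := by
    calc (L + M) / 2 * ‖s‖ ^ 2 ≤ (L + M) / 2 * (γ1 ^ 2 * α ^ 2 * ‖g‖ ^ 2) := by gcongr
      _ = (γ1 ^ 2 * α * (L + M)) * (α / 2 * ‖g‖ ^ 2) := by ring
      _ ≤ γ2 / 4 * (α / 2 * ‖g‖ ^ 2) := by gcongr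
      _ = _ := by ring
  have hcurv2 : (1/2) * (γ2 * α) ^ 2 * ⟪g, H g⟫ ≤ γ2 * α / 8 * ‖g‖ ^ 2 := by
    calc (1/2) * (γ2 * α) ^ 2 * ⟪g, H g⟫ ≤ (1/2) * (γ2 * α) ^ 2 * (M * ‖g‖ ^ 2) := by
          gcongr
          exact (le_abs_self _).trans (hquad g)
      _ ≤ (1/2) * (γ1 * α) ^ 2 * ((L + M) * ‖g‖ ^ 2) := by
          gcongr
          linarith
      _ = (γ1 ^ 2 * α * (L + M)) * (α / 2 * ‖g‖ ^ 2) := by ring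
      _ ≤ γ2 / 4 * (α / 2 * ‖g‖ ^ 2) := by gcongr
      _ = _ := by ring
  have hsH := (abs_le.1 (hquad s)).1
  have hcross : ⟪gradient f x - g, s⟫ ≤
      α * γ1 ^ 2 / γ2 * ‖gradient f x - g‖ ^ 2 + γ2 * α / 4 * ‖g‖ ^ 2 := by
    calc ⟪gradient f x - g, s⟫ ≤ ‖gradient f x - g‖ * ‖s‖ := real_inner_le_norm _ _
      _ ≤ ‖gradient f x - g‖ * (γ1 * α * ‖g‖) := by gcongr
      _ ≤ _ := by
        have h : α * γ1 ^ 2 / γ2 * ‖gradient f x - g‖ ^ 2 + γ2 * α / 4 * ‖g‖ ^ 2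
            - ‖gradient f x - g‖ * (γ1 * α * ‖g‖)
            = α / γ2 * (γ1 * ‖gradient f x - g‖ - γ2 / 2 * ‖g‖) ^ 2 := by
          field_simp
          ring
        have h' : 0 ≤ α / γ2 * (γ1 * ‖gradient f x - g‖ - γ2 / 2 * ‖g‖) ^ 2 := by positivity
        linarith
  rw [inner_sub_left] at hcross
  linarith

/-- An `m`-measurable square-integrable vector is orthogonal to the error of any of its
unbiased estimates. -/
lemma integral_inner_error_eq_zero {E Ω : Type*} [NormedAddCommGroup E] [InnerProductSpace ℝ E]
    [CompleteSpace E] {m m0 : MeasurableSpace Ω} {P : Measure Ω} [IsFiniteMeasure P] (hm : m ≤ m0)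
    {G g : Ω → E} (hG : StronglyMeasurable[m] G) (hg : Integrable g P)
    (hG2 : Integrable (fun ω => ‖G ω‖ ^ 2) P) (hGg : Integrable (fun ω => ⟪G ω, g ω⟫) P)
    (h : P[g|m] =ᵐ[P] G) :
    ∫ ω, ⟪G ω, G ω - g ω⟫ ∂P = 0 := by
  have hpull := condExp_bilin_of_stronglyMeasurable_left (innerSL ℝ) hG hGg hg
  have hint : ∫ ω, ⟪G ω, g ω⟫ ∂P = ∫ ω, ‖G ω‖ ^ 2 ∂P := by
    rw [← integral_condExp hm]
    refine integral_congr_ae ?_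
    filter_upwards [hpull, h] with ω h1 h2
    rw [← real_inner_self_eq_norm_sq]
    rw [h2] at h1
    exact h1
  simp_rw [inner_sub_right, real_inner_self_eq_norm_sq]
  rw [integral_sub hG2 hGg, hint, sub_self]

lemma affine_recursion_bound {a : ℕ → ℝ} {q θ : ℝ} (hq : 0 ≤ q)
    (h : ∀ k, 1 ≤ k → a (k + 1) - θ ≤ q * (a k - θ)) (K : ℕ) :
    a (K + 1) - θ ≤ q ^ K * (a 1 - θ) := by
  induction K with
  | zero => simp
  | succ K ih =>
    calc a (K + 1 + 1) - θ ≤ q * (a (K + 1) - θ) := h _ (by omega)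
      _ ≤ q * (q ^ K * (a 1 - θ)) := by gcongr
      _ = _ := by ring

/-- PL case, fixed stepsize: linear convergence to a neighborhood. -/
theorem trish_pl_fixed_stepsize
    {n : ℕ} (hn : 1 ≤ n)
    (f : EuclideanSpace ℝ (Fin n) → ℝ)
    (L_g : ℝ) (hLg : 0 < L_g)
    (hf : ContDiff ℝ 2 f)
    (hlip : ∀ y z, ‖gradient f y - gradient f z‖ ≤ L_g * ‖y - z‖)
    (f_inf : ℝ) (hbdd : ∀ y, f_inf ≤ f y) (hfinf : f_inf = ⨅ y, f y)
    {Ω : Type*} {m0 : MeasurableSpace Ω} (P : Measure Ω) [IsProbabilityMeasure P]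
    (ℱ : Filtration ℕ m0)
    (x g s : ℕ → Ω → EuclideanSpace ℝ (Fin n))
    (H : ℕ → Ω → (EuclideanSpace ℝ (Fin n) →L[ℝ] EuclideanSpace ℝ (Fin n)))
    (α γ1 γ2 : ℝ) (hγ2 : 0 < γ2) (hγ12 : γ2 ≤ γ1)
    (x1 : EuclideanSpace ℝ (Fin n)) (hx1 : ∀ ω, x 1 ω = x1)
    (hx_meas : ∀ k, 1 ≤ k → StronglyMeasurable[ℱ k] (x k))
    (hg_meas : ∀ k, 1 ≤ k → StronglyMeasurable[ℱ (k+1)] (g k))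
    (hs_meas : ∀ k, 1 ≤ k → StronglyMeasurable[ℱ (k+1)] (s k))
    (hH_meas : ∀ k, 1 ≤ k → StronglyMeasurable[ℱ (k+1)] (H k))
    (hHsymm : ∀ k ω u v, ⟪H k ω u, v⟫ = ⟪u, H k ω v⟫)
    (hstep : ∀ k, 1 ≤ k → ∀ ω, x (k+1) ω = x k ω + s k ω)
    (hunbiased : ∀ k, 1 ≤ k → P[g k|ℱ k] =ᵐ[P] fun ω => gradient f (x k ω))
    (hcauchy : ∀ k, 1 ≤ k → ∀ᵐ ω ∂P,
      CauchyDecrease (g k ω) (H k ω) (radius α γ1 γ2 (g k ω)) (s k ω))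
    (hint_f : ∀ k, Integrable (fun ω => f (x k ω)) P)
    (hint_grad : ∀ k, Integrable (fun ω => ‖gradient f (x k ω)‖^2) P)
    (hint_g : ∀ k, Integrable (g k) P)
    (hint_g2 : ∀ k, Integrable (fun ω => ‖g k ω‖^2) P)
    (c : ℝ) (hc : 0 < c)
    (hPL : ∀ y, 2 * c * (f y - f_inf) ≤ ‖gradient f y‖^2)
    (M_g M_H : ℝ) (hMg : 0 < M_g) (hMH : 0 < M_H)
    (hvar : ∀ k, 1 ≤ k → ∀ᵐ ω ∂P,
      (P[(fun ω' => ‖gradient f (x k ω') - g k ω'‖^2)|ℱ k]) ω ≤ M_g)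
    (hHbd : ∀ k, 1 ≤ k → ∀ᵐ ω ∂P, ‖H k ω‖ ≤ M_H)
    (hα : 0 < α) (hα1 : α ≤ γ2 / (4 * γ1^2 * (L_g + M_H))) (hα2 : α ≤ 4 / (γ2 * c)) :
    ∀ K : ℕ, 1 ≤ K →
      (∫ ω, f (x (K+1) ω) ∂P) - f_inf ≤
        4 * (γ1^2 / γ2^2 - 1/8) * M_g / c
        + (1 - (1/4) * γ2 * c * α)^K
          * (f x1 - f_inf - 4 * (γ1^2 / γ2^2 - 1/8) * M_g / c) := by
  intro K _
  have hγ1 : 0 < γ1 := hγ2.trans_le hγ12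
  have hdiff : Differentiable ℝ f := hf.differentiable (by norm_num)
  have hgrad : Continuous (gradient f) :=
    (LipschitzWith.of_dist_le_mul (K := L_g.toNNReal) fun y z => by
      rw [dist_eq_norm, dist_eq_norm, Real.coe_toNNReal _ hLg.le]
      exact hlip y z).continuous
  have hq : 0 ≤ 1 - (1/4) * γ2 * c * α := by
    rw [le_div_iff₀ (by positivity)] at hα2
    linarith
  have hA : 0 ≤ α * γ1 ^ 2 / γ2 - γ2 * α / 8 := by
    have h1 : γ2 * α ≤ α * γ1 ^ 2 / γ2 := by
      rw [le_div_iff₀ hγ2]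
      nlinarith [mul_le_mul hγ12 hγ12 hγ2.le hγ1.le]
    nlinarith [mul_pos hγ2 hα]
  have hrec : ∀ k, 1 ≤ k →
      ((∫ ω, f (x (k+1) ω) ∂P) - f_inf) - 4 * (γ1^2 / γ2^2 - 1/8) * M_g / c ≤
        (1 - (1/4) * γ2 * c * α) *
          (((∫ ω, f (x k ω) ∂P) - f_inf) - 4 * (γ1^2 / γ2^2 - 1/8) * M_g / c) := by
    intro k hk
    have hGm : StronglyMeasurable[ℱ k] (fun ω => gradient f (x k ω)) :=
      hgrad.comp_stronglyMeasurable (hx_meas k hk)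
    have hGm0 := (hGm.mono (ℱ.le k)).aestronglyMeasurable (μ := P)
    have hGg : Integrable (fun ω => ⟪gradient f (x k ω), g k ω⟫) P := by
      refine ((hint_grad k).add (hint_g2 k)).mono' (hGm0.inner (hint_g k).1) ?_
      refine Eventually.of_forall fun ω => ?_
      have h := norm_inner_le_norm (𝕜 := ℝ) (gradient f (x k ω)) (g k ω)
      simp only [Pi.add_apply]
      nlinarith [sq_nonneg (‖gradient f (x k ω)‖ - ‖g k ω‖),
        sq_nonneg ‖gradient f (x k ω)‖, sq_nonneg ‖g k ω‖]
    have horth := integral_inner_error_eq_zero (ℱ.le k) hGm (hint_g k) (hint_grad k) hGg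
      (hunbiased k hk)
    have hGe : Integrable (fun ω => ⟪gradient f (x k ω), gradient f (x k ω) - g k ω⟫) P := by
      simp_rw [inner_sub_right, real_inner_self_eq_norm_sq]
      exact (hint_grad k).sub hGg
    have he2 : Integrable (fun ω => ‖gradient f (x k ω) - g k ω‖ ^ 2) P := by
      simp_rw [norm_sub_sq_real]
      exact ((hint_grad k).sub (hGg.const_mul 2)).add (hint_g2 k)
    have hvar' : ∫ ω, ‖gradient f (x k ω) - g k ω‖ ^ 2 ∂P ≤ M_g := by
      rw [← integral_condExp (ℱ.le k)]
      calc _ ≤ ∫ _, M_g ∂P :=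
            integral_mono_ae integrable_condExp (integrable_const _) (hvar k hk)
        _ = M_g := by simp
    have hpt : ∀ᵐ ω ∂P, f (x (k+1) ω) ≤
        (1 - (1/4) * γ2 * c * α) * f (x k ω) + (1/4) * γ2 * c * α * f_inf
        + (α * γ1 ^ 2 / γ2 - γ2 * α / 8) * ‖gradient f (x k ω) - g k ω‖ ^ 2
        + γ2 * α / 4 * ⟪gradient f (x k ω), gradient f (x k ω) - g k ω⟫ := by
      filter_upwards [hcauchy k hk, hHbd k hk] with ω h1 h2
      have hstp := step_decrease hLg hdiff hlip hγ2 hγ12 hα hMH hα1 h2 h1 (x := x k ω)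
      rw [← hstep k hk ω] at hstp
      have hpl := mul_le_mul_of_nonneg_left (hPL (x k ω)) (by positivity : 0 ≤ γ2 * α / 8)
      have hg2 : ‖g k ω‖ ^ 2 = ‖gradient f (x k ω)‖ ^ 2 + ‖gradient f (x k ω) - g k ω‖ ^ 2
          - 2 * ⟪gradient f (x k ω), gradient f (x k ω) - g k ω⟫ := by
        rw [norm_sub_sq_real, inner_sub_right, real_inner_self_eq_norm_sq]
        ring
      -- Three quarters of the guaranteed decrease are given up here.
      have hdrop : γ2 * α / 8 * ‖g k ω‖ ^ 2 ≤ γ2 * α / 2 * ‖g k ω‖ ^ 2 := by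
        gcongr
        norm_num
      rw [hg2] at hdrop hstp
      linarith
    have hi1 := ((hint_f k).const_mul (1 - (1/4) * γ2 * c * α)).add
      (integrable_const (μ := P) ((1/4) * γ2 * c * α * f_inf))
    have hi2 := he2.const_mul (α * γ1 ^ 2 / γ2 - γ2 * α / 8)
    have hi3 := hGe.const_mul (γ2 * α / 4)
    have hmain := integral_mono_ae (hint_f (k+1)) ((hi1.add hi2).add hi3) hpt
    rw [integral_add' (hi1.add hi2) hi3, integral_add' hi1 hi2,
      integral_add' ((hint_f k).const_mul _) (integrable_const _), integral_const_mul,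
      integral_const_mul, integral_const_mul, integral_const_mul, horth, integral_const, probReal_univ,
      one_smul] at hmain
    have hbound := mul_le_mul_of_nonneg_left hvar' hA
    -- `θ` is the fixed point of the affine recursion.
    have hθ : (1/4) * γ2 * c * α * (4 * (γ1^2 / γ2^2 - 1/8) * M_g / c)
        = (α * γ1 ^ 2 / γ2 - γ2 * α / 8) * M_g := by
      field_simp
    linarith
  have h1 : ∫ ω, f (x 1 ω) ∂P = f x1 := by simp [hx1]
  have h := affine_recursion_bound (a := fun k => (∫ ω, f (x k ω) ∂P) - f_inf) hq hrec K
  simp only [h1] at h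
  linarith
end
end

section
/- (PL case, diminishing stepsizes: sublinear convergence.) Consider a TRish process for f with constant parameters γ_{1,k} = γ1 ≥ γ2 = γ_{2,k} > 0 and stepsizes α_k = a/(b + k) for some a, b > 0. Suppose f satisfies the Polyak–Łojasiewicz condition with constant c > 0; there exist M_g, M_H > 0 with E[‖∇f(x_k) − g_k‖² | ℱ_k] ≤ M_g·α_k and ‖H_k‖ ≤ M_H almost surely for all k; for all k, α_k ≤ min{γ2/(4γ1²(L_g + M_H)), 4/(γ2·c)}; and δ1·a > 1 where δ1 := (1/4)γ2·c. Then, with δ2 := (γ1²/γ2 − (1/8)γ2)·M_g and φ := max{(b + 1)(f(x_1) − f_inf), δ2·a²/(δ1·a − 1)}, for every k ≥ 1: E[f(x_k)] − f_inf ≤ φ/(b + k). -/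
/-!
The proof establishes a one-step contraction of the expected optimality gap and then runs an
induction.

Pathwise (`trish_step`), testing the Cauchy decrease of `s` with `t = Δ / ‖g‖`, which lies in
`[γ2 α, γ1 α]`, and inserting the result in the descent inequality (`descent_lemma`) gives, with
`e = ∇f(x) - g`,
`f (x + s) - f x ≤ -t ‖g‖² + (L_g / 2 + M_H) t² ‖g‖² + ‖e‖ t ‖g‖`.
The bound on `α` absorbs the quadratic term in `¼ γ2 α ‖g‖²`, and Young's inequality absorbs as
much again from the last term, leaving `-½ γ2 α ‖g‖² + (γ1² / γ2) α ‖e‖²`.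

Unbiasedness makes `e` orthogonal to `∇f(x)` in `L²`, so `E‖g‖² = E‖∇f(x)‖² + E‖e‖²`
(`integral_norm_sq_of_condExp`). The variance bound and the Polyak–Łojasiewicz inequality then
yield `E_{k+1} ≤ (1 - δ1 α_k) E_k + δ2 α_k²` for `E_k = E[f(x_k)] - f_inf`. This holds with room
to spare in both constants: the argument gives `4 δ1` in place of `δ1` and
`(γ1² / γ2 - ½ γ2) M_g` in place of `δ2`. With `α_k = a / (b + k)` the bound `φ / (b + k)` is
preserved by this recursion (`rate_step`).
-/

open MeasureTheory RealInnerProductSpace Filter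

noncomputable section

/-- The quadratic upper bound for a function with `L`-Lipschitz gradient. -/
theorem descent_lemma {E : Type*} [NormedAddCommGroup E] [InnerProductSpace ℝ E] [CompleteSpace E]
    {f : E → ℝ} {L : ℝ} (hf : Differentiable ℝ f)
    (hlip : ∀ y z, ‖gradient f y - gradient f z‖ ≤ L * ‖y - z‖) (x s : E) :
    f (x + s) ≤ f x + ⟪gradient f x, s⟫ + L / 2 * ‖s‖ ^ 2 := by
  -- Compare `t ↦ f (x + t s)` on `[0, 1]` with the quadratic whose derivative dominates its own.
  have hline : ∀ t : ℝ, HasDerivAt (fun t : ℝ => x + t • s) s t := fun t => by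
    simpa using ((hasDerivAt_id t).smul_const s).const_add x
  have hder : ∀ t : ℝ, HasDerivAt (fun t : ℝ => f (x + t • s)) ⟪gradient f (x + t • s), s⟫ t :=
    fun t => by
      have h := (hf (x + t • s)).hasGradientAt.hasFDerivAt.comp_hasDerivAt t (hline t)
      exact h.congr_deriv (by simp)
  have hB : ∀ t : ℝ, HasDerivAt
      (fun t : ℝ => f x + t * ⟪gradient f x, s⟫ + L / 2 * ‖s‖ ^ 2 * t ^ 2)
      (⟪gradient f x, s⟫ + L * t * ‖s‖ ^ 2) t := fun t => by
    have h := (((hasDerivAt_id t).mul_const ⟪gradient f x, s⟫).const_add (f x)).add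
      (((hasDerivAt_id t).pow 2).const_mul (L / 2 * ‖s‖ ^ 2))
    refine h.congr_deriv ?_
    simp
    ring
  have key := image_le_of_deriv_right_le_deriv_boundary (a := (0 : ℝ)) (b := 1)
    (fun t _ => (hder t).continuousAt.continuousWithinAt)
    (fun t _ => (hder t).hasDerivWithinAt) (by simp)
    (fun t _ => (hB t).continuousAt.continuousWithinAt)
    (fun t _ => (hB t).hasDerivWithinAt)
    (fun t ht => by
      have h1 : ⟪gradient f (x + t • s) - gradient f x, s⟫ ≤ L * t * ‖s‖ ^ 2 := by
        calc _ ≤ ‖gradient f (x + t • s) - gradient f x‖ * ‖s‖ := real_inner_le_norm _ _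
          _ ≤ (L * ‖x + t • s - x‖) * ‖s‖ := by gcongr; exact hlip _ _
          _ = L * t * ‖s‖ ^ 2 := by
            rw [add_sub_cancel_left, norm_smul, Real.norm_of_nonneg ht.1]; ring
      rw [inner_sub_left] at h1
      linarith)
    (Set.right_mem_Icc.2 zero_le_one)
  simpa using key

/-- The trust-region radius is the length of a multiple `t • g` of the stochastic gradient with
`γ2 α ≤ t ≤ γ1 α`. -/
theorem exists_radius_eq_mul_norm {n : ℕ} {α γ1 γ2 : ℝ} (hα : 0 ≤ α) (hγ2 : 0 < γ2)
    (hγ12 : γ2 ≤ γ1) (g : EuclideanSpace ℝ (Fin n)) :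
    ∃ t, γ2 * α ≤ t ∧ t ≤ γ1 * α ∧ radius α γ1 γ2 g = t * ‖g‖ := by
  have hγ1 : 0 < γ1 := hγ2.trans_le hγ12
  have hle : γ2 * α ≤ γ1 * α := by gcongr
  unfold radius
  split_ifs with h1 h2
  · exact ⟨_, hle, le_rfl, rfl⟩
  · have h3 : 1 / γ1 ≤ ‖g‖ := not_lt.1 h1
    have hg : 0 < ‖g‖ := lt_of_lt_of_le (by positivity) h3
    rw [div_le_iff₀ hγ1] at h3
    rw [le_div_iff₀ hγ2] at h2
    refine ⟨α / ‖g‖, ?_, ?_, by field_simp⟩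
    · rw [le_div_iff₀ hg]; nlinarith
    · rw [div_le_iff₀ hg]; nlinarith
  · exact ⟨_, le_rfl, hle, rfl⟩

/-- The pathwise one-step decrease of TRish, before expectations are taken. -/
theorem trish_step {n : ℕ} {f : EuclideanSpace ℝ (Fin n) → ℝ} {L M α γ1 γ2 : ℝ}
    (hf : Differentiable ℝ f)
    (hlip : ∀ y z, ‖gradient f y - gradient f z‖ ≤ L * ‖y - z‖)
    (hL : 0 < L) (hM : 0 < M) (hα : 0 ≤ α) (hγ2 : 0 < γ2) (hγ12 : γ2 ≤ γ1)
    (hα1 : α ≤ γ2 / (4 * γ1 ^ 2 * (L + M)))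
    (x g s : EuclideanSpace ℝ (Fin n))
    (H : EuclideanSpace ℝ (Fin n) →L[ℝ] EuclideanSpace ℝ (Fin n)) (hH : ‖H‖ ≤ M)
    (hs : CauchyDecrease g H (radius α γ1 γ2 g) s) :
    f (x + s) - f x ≤
      -(1 / 2 * γ2 * α) * ‖g‖ ^ 2 + γ1 ^ 2 / γ2 * α * ‖gradient f x - g‖ ^ 2 := by
  have hγ1 : 0 < γ1 := hγ2.trans_le hγ12
  obtain ⟨t, ht2, ht1, hr⟩ := exists_radius_eq_mul_norm hα hγ2 hγ12 g
  rw [hr] at hs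
  obtain ⟨hsn, hdec⟩ := hs
  have ht0 : 0 ≤ t := le_trans (by positivity) ht2
  have hdec := hdec t ht0 le_rfl
  have hquad : ∀ v, |⟪v, H v⟫| ≤ M * ‖v‖ ^ 2 := fun v => by
    calc _ ≤ ‖v‖ * ‖H v‖ := abs_real_inner_le_norm _ _
      _ ≤ ‖v‖ * (M * ‖v‖) := by gcongr; exact H.le_of_opNorm_le hH v
      _ = M * ‖v‖ ^ 2 := by ring
  have hgH : t ^ 2 * ⟪g, H g⟫ ≤ t ^ 2 * (M * ‖g‖ ^ 2) := by
    gcongr; exact (abs_le.1 (hquad g)).2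
  have hsH := (abs_le.1 (hquad s)).1
  have hs2 : ‖s‖ ^ 2 ≤ t ^ 2 * ‖g‖ ^ 2 := by rw [← mul_pow]; gcongr
  have hs2' : (L + M) * ‖s‖ ^ 2 ≤ (L + M) * (t ^ 2 * ‖g‖ ^ 2) := by gcongr
  have hdesc := descent_lemma hf hlip x s
  set e := ‖gradient f x - g‖ with he
  have hes : ⟪gradient f x - g, s⟫ ≤ e * (γ1 * α * ‖g‖) := by
    calc _ ≤ e * ‖s‖ := real_inner_le_norm _ _
      _ ≤ e * (γ1 * α * ‖g‖) := by
        gcongr; exact hsn.trans (by gcongr)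
  rw [inner_sub_left] at hes
  have hα1' : γ1 ^ 2 * α * (L + M) ≤ γ2 / 4 := by
    rw [le_div_iff₀ (by positivity)] at hα1; linarith
  have ht2' : (L + M) * (t ^ 2 * ‖g‖ ^ 2) ≤ γ2 / 4 * α * ‖g‖ ^ 2 := by
    calc _ ≤ (L + M) * ((γ1 * α) ^ 2 * ‖g‖ ^ 2) := by gcongr
      _ = (γ1 ^ 2 * α * (L + M)) * α * ‖g‖ ^ 2 := by ring
      _ ≤ _ := by gcongr
  have hL2 : 0 ≤ L * (t ^ 2 * ‖g‖ ^ 2) := by positivity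
  have htg : γ2 * α * ‖g‖ ^ 2 ≤ t * ‖g‖ ^ 2 := by gcongr
  have hyoung : e * (γ1 * α * ‖g‖) ≤ γ1 ^ 2 / γ2 * α * e ^ 2 + 1 / 4 * γ2 * α * ‖g‖ ^ 2 := by
    have h : γ1 ^ 2 / γ2 * α * e ^ 2 + 1 / 4 * γ2 * α * ‖g‖ ^ 2 - e * (γ1 * α * ‖g‖)
        = α / γ2 * (γ1 * e - 1 / 2 * γ2 * ‖g‖) ^ 2 := by field_simp; ring
    have : 0 ≤ α / γ2 * (γ1 * e - 1 / 2 * γ2 * ‖g‖) ^ 2 := by positivity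
    linarith
  linarith

/-- The bias–variance decomposition: if `G` is the conditional expectation of `g`, then `G` and
`G - g` are orthogonal in `L²`. -/
theorem integral_norm_sq_of_condExp {Ω E : Type*} [NormedAddCommGroup E] [InnerProductSpace ℝ E]
    [CompleteSpace E] {m m0 : MeasurableSpace Ω} {P : Measure Ω} [IsProbabilityMeasure P]
    (hm : m ≤ m0) {G g : Ω → E} (hG : StronglyMeasurable[m] G) (hg : Integrable g P)
    (hG2 : Integrable (fun ω => ‖G ω‖ ^ 2) P) (hg2 : Integrable (fun ω => ‖g ω‖ ^ 2) P)
    (hcond : P[g|m] =ᵐ[P] G) :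
    Integrable (fun ω => ‖G ω - g ω‖ ^ 2) P ∧
      ∫ ω, ‖g ω‖ ^ 2 ∂P = ∫ ω, ‖G ω‖ ^ 2 ∂P + ∫ ω, ‖G ω - g ω‖ ^ 2 ∂P := by
  have hGm : AEStronglyMeasurable G P := (hG.mono hm).aestronglyMeasurable
  have hGL : MemLp G 2 P := (memLp_two_iff_integrable_sq_norm hGm).2 hG2
  have hgL : MemLp g 2 P := (memLp_two_iff_integrable_sq_norm hg.aestronglyMeasurable).2 hg2
  have he2 : Integrable (fun ω => ‖G ω - g ω‖ ^ 2) P :=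
    (memLp_two_iff_integrable_sq_norm (hGm.sub hg.aestronglyMeasurable)).1 (hGL.sub hgL)
  have hexp : ∀ ω, ‖G ω - g ω‖ ^ 2 = ‖G ω‖ ^ 2 - 2 * ⟪G ω, g ω⟫ + ‖g ω‖ ^ 2 :=
    fun ω => norm_sub_sq_real _ _
  have hin : Integrable (fun ω => ⟪G ω, g ω⟫) P := by
    refine (((hG2.add hg2).sub he2).const_mul (1 / 2)).congr (ae_of_all _ fun ω => ?_)
    simp only [Pi.add_apply, Pi.sub_apply, hexp]
    ring
  have hpull : ∫ ω, ⟪G ω, g ω⟫ ∂P = ∫ ω, ‖G ω‖ ^ 2 ∂P := by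
    have h := condExp_bilin_of_stronglyMeasurable_left (μ := P) (innerSL ℝ (E := E)) hG
      hin hg
    rw [← integral_condExp hm (f := fun ω => ⟪G ω, g ω⟫)]
    refine integral_congr_ae ?_
    filter_upwards [h, hcond] with ω h1 h2
    refine h1.trans ?_
    rw [h2]
    exact real_inner_self_eq_norm_sq _
  refine ⟨he2, ?_⟩
  have hsum : ∫ ω, ‖G ω - g ω‖ ^ 2 ∂P
      = ∫ ω, ‖G ω‖ ^ 2 ∂P - 2 * ∫ ω, ⟪G ω, g ω⟫ ∂P + ∫ ω, ‖g ω‖ ^ 2 ∂P := by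
    rw [← integral_const_mul, ← integral_sub hG2 (hin.const_mul 2)]
    exact (integral_congr_ae (ae_of_all _ hexp)).trans
      (integral_add (hG2.sub (hin.const_mul 2)) hg2)
  rw [hsum, hpull]
  ring

/-- The recursion with stepsizes `a / ν` propagates the bound `φ / ν` to `φ / (ν + 1)`. -/
theorem rate_step {ν δ1 δ2 a φ u v : ℝ} (hν : 1 ≤ ν) (hφ : 0 ≤ φ)
    (hφ2 : δ2 * a ^ 2 ≤ φ * (δ1 * a - 1)) (hδ : δ1 * (a / ν) ≤ 1) (hu : u ≤ φ / ν)
    (hv : v ≤ (1 - δ1 * (a / ν)) * u + δ2 * (a / ν) ^ 2) : v ≤ φ / (ν + 1) := by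
  have hν0 : 0 < ν := by linarith
  have h1 : (1 - δ1 * (a / ν)) * u ≤ (1 - δ1 * (a / ν)) * (φ / ν) :=
    mul_le_mul_of_nonneg_left hu (by linarith)
  have h2 : (1 - δ1 * (a / ν)) * (φ / ν) + δ2 * (a / ν) ^ 2
      = ((ν - 1) * φ - (φ * (δ1 * a - 1) - δ2 * a ^ 2)) / ν ^ 2 := by field_simp; ring
  have h3 : ((ν - 1) * φ - (φ * (δ1 * a - 1) - δ2 * a ^ 2)) / ν ^ 2 ≤ φ / (ν + 1) := by
    rw [div_le_div_iff₀ (by positivity) (by positivity)]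
    nlinarith
  linarith

/-- PL case, diminishing stepsizes: sublinear convergence. -/
theorem trish_pl_diminishing_stepsize
    {n : ℕ} (hn : 1 ≤ n)
    (f : EuclideanSpace ℝ (Fin n) → ℝ)
    (L_g : ℝ) (hLg : 0 < L_g)
    (hf : ContDiff ℝ 2 f)
    (hlip : ∀ y z, ‖gradient f y - gradient f z‖ ≤ L_g * ‖y - z‖)
    (f_inf : ℝ) (hbdd : ∀ y, f_inf ≤ f y) (hfinf : f_inf = ⨅ y, f y)
    {Ω : Type*} {m0 : MeasurableSpace Ω} (P : Measure Ω) [IsProbabilityMeasure P]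
    (ℱ : Filtration ℕ m0)
    (x g s : ℕ → Ω → EuclideanSpace ℝ (Fin n))
    (H : ℕ → Ω → (EuclideanSpace ℝ (Fin n) →L[ℝ] EuclideanSpace ℝ (Fin n)))
    (γ1 γ2 : ℝ) (hγ2 : 0 < γ2) (hγ12 : γ2 ≤ γ1)
    (a b : ℝ) (ha : 0 < a) (hb : 0 < b)
    (α : ℕ → ℝ) (hαdef : ∀ k : ℕ, α k = a / (b + k))
    (x1 : EuclideanSpace ℝ (Fin n)) (hx1 : ∀ ω, x 1 ω = x1)
    (hx_meas : ∀ k, 1 ≤ k → StronglyMeasurable[ℱ k] (x k))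
    (hg_meas : ∀ k, 1 ≤ k → StronglyMeasurable[ℱ (k+1)] (g k))
    (hs_meas : ∀ k, 1 ≤ k → StronglyMeasurable[ℱ (k+1)] (s k))
    (hH_meas : ∀ k, 1 ≤ k → StronglyMeasurable[ℱ (k+1)] (H k))
    (hHsymm : ∀ k ω u v, ⟪H k ω u, v⟫ = ⟪u, H k ω v⟫)
    (hstep : ∀ k, 1 ≤ k → ∀ ω, x (k+1) ω = x k ω + s k ω)
    (hunbiased : ∀ k, 1 ≤ k → P[g k|ℱ k] =ᵐ[P] fun ω => gradient f (x k ω))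
    (hcauchy : ∀ k, 1 ≤ k → ∀ᵐ ω ∂P,
      CauchyDecrease (g k ω) (H k ω) (radius (α k) γ1 γ2 (g k ω)) (s k ω))
    (hint_f : ∀ k, Integrable (fun ω => f (x k ω)) P)
    (hint_grad : ∀ k, Integrable (fun ω => ‖gradient f (x k ω)‖^2) P)
    (hint_g : ∀ k, Integrable (g k) P)
    (hint_g2 : ∀ k, Integrable (fun ω => ‖g k ω‖^2) P)
    (c : ℝ) (hc : 0 < c)
    (hPL : ∀ y, 2 * c * (f y - f_inf) ≤ ‖gradient f y‖^2)
    (M_g M_H : ℝ) (hMg : 0 < M_g) (hMH : 0 < M_H)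
    (hvar : ∀ k, 1 ≤ k → ∀ᵐ ω ∂P,
      (P[(fun ω' => ‖gradient f (x k ω') - g k ω'‖^2)|ℱ k]) ω ≤ M_g * α k)
    (hHbd : ∀ k, 1 ≤ k → ∀ᵐ ω ∂P, ‖H k ω‖ ≤ M_H)
    (hα1 : ∀ k, 1 ≤ k → α k ≤ γ2 / (4 * γ1^2 * (L_g + M_H)))
    (hα2 : ∀ k, 1 ≤ k → α k ≤ 4 / (γ2 * c))
    (hδ1a : 1 < ((1/4) * γ2 * c) * a) :
    ∀ k : ℕ, 1 ≤ k →
      (∫ ω, f (x k ω) ∂P) - f_inf ≤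
        max ((b + 1) * (f x1 - f_inf))
          (((γ1^2 / γ2 - (1/8) * γ2) * M_g) * a^2 / (((1/4) * γ2 * c) * a - 1)) / (b + k) := by
  have hdiff : Differentiable ℝ f := hf.differentiable (by norm_num)
  have hgc : Continuous (gradient f) := by
    have : gradient f = fun y => (InnerProductSpace.toDual ℝ _).symm (fderiv ℝ f y) := rfl
    rw [this]
    exact (InnerProductSpace.toDual ℝ _).symm.continuous.comp
      (hf.continuous_fderiv (by norm_num))
  have hγ1 : 0 < γ1 := hγ2.trans_le hγ12
  have hαpos : ∀ k, 0 < α k := fun k => by rw [hαdef]; positivity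
  have hγγ : γ2 ≤ γ1 ^ 2 / γ2 := by rw [le_div_iff₀ hγ2]; nlinarith
  set δ1 := 1 / 4 * γ2 * c with hδ1
  set δ2 := (γ1 ^ 2 / γ2 - 1 / 8 * γ2) * M_g with hδ2
  -- The one-step contraction of the expected optimality gap.
  have hrec : ∀ k, 1 ≤ k → (∫ ω, f (x (k + 1) ω) ∂P) - f_inf ≤
      (1 - δ1 * α k) * ((∫ ω, f (x k ω) ∂P) - f_inf) + δ2 * α k ^ 2 := by
    intro k hk
    have hα := hαpos k
    obtain ⟨he2, hbv⟩ := integral_norm_sq_of_condExp (ℱ.le k)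
      (hgc.comp_stronglyMeasurable (hx_meas k hk)) (hint_g k) (hint_grad k) (hint_g2 k)
      (hunbiased k hk)
    have hpath : ∀ᵐ ω ∂P, f (x (k + 1) ω) - f (x k ω) ≤ -(1 / 2 * γ2 * α k) * ‖g k ω‖ ^ 2
        + γ1 ^ 2 / γ2 * α k * ‖gradient f (x k ω) - g k ω‖ ^ 2 := by
      filter_upwards [hcauchy k hk, hHbd k hk] with ω h1 h2
      rw [hstep k hk ω]
      exact trish_step hdiff hlip hLg hMH hα.le hγ2 hγ12 (hα1 k hk) _ _ _ _ h2 h1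
    have hi := integral_mono_ae ((hint_f (k + 1)).sub (hint_f k))
      (((hint_g2 k).const_mul _).add (he2.const_mul _)) hpath
    simp only [Pi.sub_apply, Pi.add_apply] at hi
    rw [integral_sub (hint_f _) (hint_f _),
      integral_add ((hint_g2 k).const_mul _) (he2.const_mul _), integral_const_mul,
      integral_const_mul, hbv] at hi
    have hV : ∫ ω, ‖gradient f (x k ω) - g k ω‖ ^ 2 ∂P ≤ M_g * α k := by
      rw [← integral_condExp (ℱ.le k)]
      simpa using integral_mono_ae integrable_condExp (integrable_const _) (hvar k hk)
    have hPLi : 2 * c * ((∫ ω, f (x k ω) ∂P) - f_inf)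
        ≤ ∫ ω, ‖gradient f (x k ω)‖ ^ 2 ∂P := by
      have h := integral_mono (((hint_f k).sub (integrable_const f_inf)).const_mul (2 * c))
        (hint_grad k) (fun ω => hPL (x k ω))
      simp only [Pi.sub_apply] at h
      rwa [integral_const_mul, integral_sub (hint_f _) (integrable_const _), integral_const,
        probReal_univ, one_smul] at h
    have hE0 : 0 ≤ (∫ ω, f (x k ω) ∂P) - f_inf := by
      have h := integral_mono (integrable_const f_inf) (hint_f k) (fun ω => hbdd (x k ω))
      simp at h
      linarith
    set V := ∫ ω, ‖gradient f (x k ω) - g k ω‖ ^ 2 ∂P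
    set D := ∫ ω, ‖gradient f (x k ω)‖ ^ 2 ∂P
    set E0 := (∫ ω, f (x k ω) ∂P) - f_inf with hE0def
    have hV' : (γ1 ^ 2 / γ2 - 1 / 2 * γ2) * α k * V
        ≤ (γ1 ^ 2 / γ2 - 1 / 2 * γ2) * α k * (M_g * α k) :=
      mul_le_mul_of_nonneg_left hV (mul_nonneg (by linarith) hα.le)
    have hslack : 0 ≤ 3 / 8 * γ2 * M_g * α k ^ 2 := by positivity
    have hD : 1 / 2 * γ2 * α k * (2 * c * E0) ≤ 1 / 2 * γ2 * α k * D :=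
      mul_le_mul_of_nonneg_left hPLi (by positivity)
    have hslack' : 0 ≤ 3 / 4 * γ2 * c * α k * E0 := by positivity
    rw [hδ1, hδ2]
    linarith
  set φ := max ((b + 1) * (f x1 - f_inf)) (δ2 * a ^ 2 / (δ1 * a - 1)) with hφdef
  have hφ1 : (b + 1) * (f x1 - f_inf) ≤ φ := le_max_left _ _
  have hφ2 : δ2 * a ^ 2 ≤ φ * (δ1 * a - 1) := by
    rw [← div_le_iff₀ (by linarith)]
    exact le_max_right _ _
  have hφ0 : 0 ≤ φ := le_trans (mul_nonneg (by linarith) (sub_nonneg.2 (hbdd x1))) hφ1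
  intro k hk
  induction k, hk using Nat.le_induction with
  | base =>
    simp only [hx1, integral_const, probReal_univ, one_smul, Nat.cast_one]
    rw [le_div_iff₀ (by linarith)]
    linarith
  | succ k hk ih =>
    have hk' : (1 : ℝ) ≤ k := by exact_mod_cast hk
    have hr := hrec k hk
    have hδα : δ1 * α k ≤ 1 := by
      have h := hα2 k hk
      rw [le_div_iff₀ (by positivity)] at h
      rw [hδ1]
      linarith
    rw [hαdef] at hr hδα
    push_cast
    rw [← add_assoc]
    exact rate_step (by linarith) hφ0 hφ2 hδα ih hr
end
end
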